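/- arXiv:1403.3080 — 3 statements merged into one kernel-verified Lean document; each statement's English description precedes it below -/
import Mathlib

section
/- For all positive integers a and b, R⁺(a,b) = (1/2)^{a+b} / (max(a,b) · B(a,b)); in particular R⁺(a,b) > 0. -/
/-- The Beta function `B(a,b) = ∫₀¹ t^(a-1) (1-t)^(b-1) dt`. -/
noncomputable def betaFn (a b : ℝ) : ℝ := ∫ t in (0:ℝ)..1, t ^ (a - 1) * (1 - t) ^ (b - 1)

/-- `I(a,b)`: the probability that a `Beta(a,b)` random variable is `≥ 1/2`. -/
noncomputable def I (a b : ℝ) : ℝ :=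
  (1 / betaFn a b) * ∫ t in (1/2 : ℝ)..1, t ^ (a - 1) * (1 - t) ^ (b - 1)

/-- `h(x) = max (x, 1-x)`. -/
noncomputable def hFn (x : ℝ) : ℝ := max x (1 - x)

/-- Expected stage-wise reward. -/
noncomputable def R (a b : ℝ) : ℝ :=
  a / (a + b) * (hFn (I (a + 1) b) - hFn (I a b)) +
    b / (a + b) * (hFn (I a (b + 1)) - hFn (I a b))

/-- Optimistic knowledge-gradient reward. -/
noncomputable def Rplus (a b : ℝ) : ℝ :=
  max (hFn (I (a + 1) b) - hFn (I a b)) (hFn (I a (b + 1)) - hFn (I a b))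

/-- Pessimistic knowledge-gradient reward. -/
noncomputable def Rminus (a b : ℝ) : ℝ :=
  min (hFn (I (a + 1) b) - hFn (I a b)) (hFn (I a (b + 1)) - hFn (I a b))

noncomputable def Uf (m n : ℕ) : ℝ := ∫ t in (1/2 : ℝ)..1, t ^ m * (1 - t) ^ n

theorem Uf_ii (m n : ℕ) (x y : ℝ) :
    IntervalIntegrable (fun t : ℝ => t ^ m * (1 - t) ^ n) MeasureTheory.volume x y :=
  Continuous.intervalIntegrable (by fun_prop) _ _

theorem Uf_add (m n : ℕ) : Uf m (n+1) + Uf (m+1) n = Uf m n := by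
  unfold Uf
  rw [← intervalIntegral.integral_add (Uf_ii _ _ _ _) (Uf_ii _ _ _ _)]
  congr 1
  ext t
  ring

theorem Uf_parts (m n : ℕ) :
    ((n:ℝ)+1) * Uf (m+1) n - ((m:ℝ)+1) * Uf m (n+1) = (1/2:ℝ)^(m+n+2) := by
  unfold Uf
  rw [← intervalIntegral.integral_const_mul, ← intervalIntegral.integral_const_mul,
    ← intervalIntegral.integral_sub ((Uf_ii _ _ _ _).const_mul _) ((Uf_ii _ _ _ _).const_mul _)]
  rw [intervalIntegral.integral_eq_sub_of_hasDerivAt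
    (f := fun t : ℝ => - (t^(m+1) * (1-t)^(n+1)))]
  · norm_num
    ring
  · intro t _
    have h1 := hasDerivAt_pow (m+1) t
    have h2 := ((hasDerivAt_id t).const_sub 1).pow (n+1)
    refine HasDerivAt.congr_deriv (h1.mul h2).neg ?_
    simp
    ring
  · exact ((Uf_ii _ _ _ _).const_mul _).sub ((Uf_ii _ _ _ _).const_mul _)

theorem Uf_mono (m n : ℕ) (h : n ≤ m) : Uf n m ≤ Uf m n := by
  unfold Uf
  apply intervalIntegral.integral_mono_on (by norm_num) (Uf_ii _ _ _ _) (Uf_ii _ _ _ _)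
  intro t ht
  obtain ⟨k, rfl⟩ := Nat.exists_eq_add_of_le h
  have h0 : 0 ≤ 1 - t := by linarith [ht.2]
  have h1 : (0:ℝ) ≤ t := by linarith [ht.1]
  have h2 : (1-t)^k ≤ t^k := pow_le_pow_left₀ h0 (by linarith [ht.1]) k
  have h3 : 0 ≤ t^n * (1-t)^n := by positivity
  have := mul_le_mul_of_nonneg_left h2 h3
  rw [pow_add, pow_add]
  linarith

theorem Uf_pos (m n : ℕ) : 0 < Uf m n := by
  unfold Uf
  apply intervalIntegral.intervalIntegral_pos_of_pos_on (Uf_ii _ _ _ _) _ (by norm_num)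
  intro t ht
  have h0 : 0 < 1 - t := by linarith [ht.2]
  have h1 : (0:ℝ) < t := by linarith [ht.1]
  positivity

theorem betaFn_nat (x y : ℝ) (m n : ℕ) (hx : x = m + 1) (hy : y = n + 1) :
    betaFn x y = Uf m n + Uf n m := by
  subst hx hy
  unfold betaFn Uf
  simp only [add_sub_cancel_right, Real.rpow_natCast]
  have : ∫ t in (1/2 : ℝ)..1, t ^ n * (1 - t) ^ m = ∫ t in (0 : ℝ)..(1/2), t ^ m * (1 - t) ^ n := by
    have := intervalIntegral.integral_comp_sub_left (a := 1/2) (b := 1)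
      (fun t : ℝ => t ^ m * (1 - t) ^ n) 1
    norm_num at this
    norm_num
    rw [← this]
    congr 1
    ext t
    ring
  rw [this, add_comm, intervalIntegral.integral_add_adjacent_intervals (Uf_ii _ _ _ _) (Uf_ii _ _ _ _)]

theorem I_nat (x y : ℝ) (m n : ℕ) (hx : x = m + 1) (hy : y = n + 1) :
    I x y = Uf m n / (Uf m n + Uf n m) := by
  unfold I
  rw [betaFn_nat x y m n hx hy]
  subst hx hy
  simp only [add_sub_cancel_right, Real.rpow_natCast]
  rw [← Uf]
  ring

theorem Uf_half (m n : ℕ) (h : n ≤ m) : 1/2 ≤ Uf m n / (Uf m n + Uf n m) := by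
  have := Uf_pos m n
  have := Uf_pos n m
  rw [le_div_iff₀ (by positivity)]
  linarith [Uf_mono m n h]

theorem Uf_half' (m n : ℕ) (h : m ≤ n) : Uf m n / (Uf m n + Uf n m) ≤ 1/2 := by
  have := Uf_pos m n
  have := Uf_pos n m
  rw [div_le_iff₀ (by positivity)]
  linarith [Uf_mono n m h]

theorem Uf_left (m n : ℕ) : Uf (m+1) n / (Uf (m+1) n + Uf n (m+1)) =
    Uf m n / (Uf m n + Uf n m) + (1/2:ℝ)^(m+n+2) / ((m+1) * (Uf m n + Uf n m)) := by
  have p1 := Uf_pos m n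
  have p2 := Uf_pos n m
  have p3 := Uf_pos (m+1) n
  have p4 := Uf_pos n (m+1)
  have e1 := Uf_parts m n
  have e2 := Uf_add m n
  have e3 := Uf_parts n m
  have e4 := Uf_add n m
  rw [show n + m + 2 = m + n + 2 by ring] at e3
  have q : (0:ℝ) < m + n + 2 := by positivity
  have f1 : Uf (m+1) n = ((m+1) * Uf m n + (1/2:ℝ)^(m+n+2)) / (m+n+2) := by
    rw [eq_div_iff q.ne', ← e1, ← e2]; ring
  have f2 : Uf n (m+1) = ((m+1) * Uf n m - (1/2:ℝ)^(m+n+2)) / (m+n+2) := by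
    rw [eq_div_iff q.ne', ← e3, ← e4]; ring
  have f3 : Uf (m+1) n + Uf n (m+1) = (m+1) * (Uf m n + Uf n m) / (m+n+2) := by
    rw [f1, f2]; ring
  rw [f3, f1]
  have : (0:ℝ) < m + 1 := by positivity
  field_simp

theorem Uf_right (m n : ℕ) : Uf m (n+1) / (Uf m (n+1) + Uf (n+1) m) =
    Uf m n / (Uf m n + Uf n m) - (1/2:ℝ)^(m+n+2) / ((n+1) * (Uf m n + Uf n m)) := by
  have h := Uf_left n m
  have p1 := Uf_pos m n
  have p2 := Uf_pos n m
  have p3 := Uf_pos (n+1) m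
  have p4 := Uf_pos m (n+1)
  have g1 : Uf m (n+1) / (Uf m (n+1) + Uf (n+1) m)
      = 1 - Uf (n+1) m / (Uf (n+1) m + Uf m (n+1)) := by field_simp; ring
  have g2 : Uf m n / (Uf m n + Uf n m) = 1 - Uf n m / (Uf n m + Uf m n) := by field_simp; ring
  rw [g1, h, g2, show n + m + 2 = m + n + 2 by ring, add_comm (Uf n m) (Uf m n)]
  ring

theorem hFn_hi {x : ℝ} (h : 1/2 ≤ x) : hFn x = x := max_eq_left (by linarith)
theorem hFn_lo {x : ℝ} (h : x ≤ 1/2) : hFn x = 1 - x := max_eq_right (by linarith)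

theorem Rplus_eq (a b : ℕ) (ha : 0 < a) (hb : 0 < b) :
    Rplus a b = (1 / 2 : ℝ) ^ (a + b) / (max (a : ℝ) (b : ℝ) * betaFn a b) ∧
      0 < Rplus a b := by
  obtain ⟨m, rfl⟩ := Nat.exists_eq_succ_of_ne_zero ha.ne'
  obtain ⟨n, rfl⟩ := Nat.exists_eq_succ_of_ne_zero hb.ne'
  have p1 := Uf_pos m n
  have p2 := Uf_pos n m
  have key : Rplus (m.succ : ℕ) (n.succ : ℕ) = (1 / 2 : ℝ) ^ (m.succ + n.succ) /
      (max ((m.succ : ℕ) : ℝ) ((n.succ : ℕ) : ℝ) * betaFn (m.succ : ℕ) (n.succ : ℕ)) := by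
    unfold Rplus
    rw [betaFn_nat _ _ m n (by push_cast; ring) (by push_cast; ring),
      I_nat (m.succ : ℕ) (n.succ : ℕ) m n (by push_cast; ring) (by push_cast; ring),
      I_nat ((m.succ : ℕ) + 1) (n.succ : ℕ) (m+1) n (by push_cast; ring) (by push_cast; ring),
      I_nat (m.succ : ℕ) ((n.succ : ℕ) + 1) m (n+1) (by push_cast; ring) (by push_cast; ring),
      show m.succ + n.succ = m + n + 2 by simp only [Nat.succ_eq_add_one]; ring]
    have l := Uf_left m n
    have r := Uf_right m n
    have d1 : 0 < (1/2:ℝ)^(m+n+2) / ((m+1) * (Uf m n + Uf n m)) := by positivity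
    have d2 : 0 < (1/2:ℝ)^(m+n+2) / ((n+1) * (Uf m n + Uf n m)) := by positivity
    push_cast
    rcases lt_trichotomy m n with h | h | h
    · have hc : (m:ℝ) + 1 ≤ n + 1 := by exact_mod_cast Nat.succ_le_succ h.le
      rw [max_eq_right hc, hFn_lo (Uf_half' m n h.le), hFn_lo (Uf_half' (m+1) n h),
        hFn_lo (Uf_half' m (n+1) (by omega)), max_eq_right (by linarith), r]
      ring
    · subst h
      have e : Uf m m / (Uf m m + Uf m m) = 1/2 := by field_simp; norm_num
      rw [max_self, hFn_hi (Uf_half m m le_rfl), hFn_hi (Uf_half (m+1) m (by omega)),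
        hFn_lo (Uf_half' m (m+1) (by omega)), max_eq_left (by linarith), l]
      ring
    · have hc : (n:ℝ) + 1 ≤ m + 1 := by exact_mod_cast Nat.succ_le_succ h.le
      rw [max_eq_left hc, hFn_hi (Uf_half m n h.le), hFn_hi (Uf_half (m+1) n (by omega)),
        hFn_hi (Uf_half m (n+1) h), max_eq_left (by linarith), l]
      ring
  refine ⟨key, ?_⟩
  rw [key, betaFn_nat _ _ m n (by push_cast; ring) (by push_cast; ring)]
  have : (0:ℝ) < max ((m.succ : ℕ) : ℝ) ((n.succ : ℕ) : ℝ) :=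
    lt_max_of_lt_left (by positivity)
  positivity
end

section
/- R⁻(2,1) = R⁻(1,2), and for all positive integers a and b with a + b ≠ 3, R⁻(2,1) < R⁻(a,b). -/
noncomputable def Jn (x : ℝ) (a b : ℕ) : ℝ := ∫ t in x..1, t ^ a * (1 - t) ^ b

lemma Jn_rec (x : ℝ) (a b : ℕ) :
    ((a:ℝ)+1) * Jn x a b - ((a:ℝ)+b+2) * Jn x (a+1) b = - (x^(a+1) * (1-x)^(b+1)) := by
  have h : ∀ t ∈ Set.uIcc x 1, HasDerivAt (fun t : ℝ => t^(a+1) * (1-t)^(b+1))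
      (((a:ℝ)+1) * (t^a * (1-t)^b) - ((a:ℝ)+b+2) * (t^(a+1) * (1-t)^b)) t := by
    intro t _
    have h1 := (hasDerivAt_id t).pow (a+1)
    have h2 := ((hasDerivAt_id t).const_sub 1).pow (b+1)
    have h3 := h1.mul h2
    refine (h3.congr_deriv ?_)
    simp
    ring
  have hi := intervalIntegral.integral_eq_sub_of_hasDerivAt h
    (Continuous.intervalIntegrable (by fun_prop) _ _)
  rw [intervalIntegral.integral_sub (Continuous.intervalIntegrable (by fun_prop) _ _)
    (Continuous.intervalIntegrable (by fun_prop) _ _),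
    intervalIntegral.integral_const_mul, intervalIntegral.integral_const_mul] at hi
  unfold Jn
  rw [hi]
  simp

lemma Jn_add (x : ℝ) (a b : ℕ) : Jn x a (b+1) = Jn x a b - Jn x (a+1) b := by
  unfold Jn
  rw [← intervalIntegral.integral_sub (Continuous.intervalIntegrable (by fun_prop) _ _)
    (Continuous.intervalIntegrable (by fun_prop) _ _)]
  congr 1
  ext t
  ring

lemma Jn_zero (b : ℕ) : Jn 0 0 b * (b+1) = 1 := by
  have := intervalIntegral.integral_comp_sub_left (a := 0) (b := 1) (fun t : ℝ => t ^ b) 1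
  unfold Jn
  simp only [pow_zero, one_mul]
  rw [this]
  simp
  field_simp

lemma Jn_beta (a b : ℕ) : Jn 0 a b * (((a:ℝ)+b+1) * ((a+b).choose a : ℕ)) = 1 := by
  induction a with
  | zero => simpa using Jn_zero b
  | succ a ih =>
    have h1 := Jn_rec 0 a b
    have h2 := Nat.add_one_mul_choose_eq (a+b) a
    have h2' : ((a:ℝ)+b+1) * ((a+b).choose a : ℕ) = ((a+1+b).choose (a+1) : ℕ) * ((a:ℝ)+1) := by
      rw [show a+1+b = (a+b).succ by simp; ring]
      exact_mod_cast h2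
    rw [h2'] at ih
    refine Eq.trans ?_ ih
    push_cast
    simp at h1
    linear_combination (-((a+1+b).choose (a+1) : ℕ) : ℝ) * h1

lemma I_eq (a b : ℕ) : I (a+1) (b+1) = Jn (1/2) a b / Jn 0 a b := by
  unfold I betaFn Jn
  simp only [add_sub_cancel_right, Real.rpow_natCast]
  ring

lemma I_left (a b : ℕ) : I ((a+1)+1) (b+1) =
    I (a+1) (b+1) + ((a+b+1).choose (a+1) : ℕ) / 2^(a+b+2) := by
  have e := I_eq (a+1) b
  push_cast at e
  rw [e, I_eq]
  have h1 := Jn_rec 0 a b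
  have h2 := Jn_rec (1/2) a b
  have hb := Jn_beta a b
  have h3 : ((a:ℝ)+b+1) * ((a+b).choose a : ℕ) = ((a+b+1).choose (a+1) : ℕ) * ((a:ℝ)+1) := by
    exact_mod_cast Nat.add_one_mul_choose_eq (a+b) a
  rw [h3] at hb
  have hB : Jn 0 a b ≠ 0 := by rintro h; simp [h] at hb
  have ha : (a:ℝ)+1 ≠ 0 := by positivity
  have hn : (a:ℝ)+b+2 ≠ 0 := by positivity
  have e1 : Jn 0 (a+1) b = (a+1) * Jn 0 a b / (a+b+2) := by
    field_simp; simp at h1; linarith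
  have e2 : Jn (1/2) (a+1) b = ((a+1) * Jn (1/2) a b + 1/2^(a+b+2)) / (a+b+2) := by
    have : (1/2:ℝ)^(a+1) * (1-1/2)^(b+1) = 1/2^(a+b+2) := by
      rw [show (1:ℝ)-1/2 = 1/2 by norm_num, ← pow_add, one_div_pow]; congr 2; ring
    rw [this] at h2
    rw [eq_div_iff hn]; linarith
  have e3 : (((a+b+1).choose (a+1) : ℕ) : ℝ) = 1 / (Jn 0 a b * (a+1)) := by
    rw [eq_div_iff (by positivity)]; linarith
  rw [e1, e2, e3]
  field_simp

lemma I_right (a b : ℕ) : I (a+1) ((b+1)+1) =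
    I (a+1) (b+1) - ((a+b+1).choose (b+1) : ℕ) / 2^(a+b+2) := by
  have e := I_eq a (b+1)
  push_cast at e
  rw [e, I_eq, Jn_add, Jn_add]
  have h1 := Jn_rec 0 a b
  have h2 := Jn_rec (1/2) a b
  have hb := Jn_beta a b
  have h3 : ((a:ℝ)+b+1) * ((a+b).choose a : ℕ) = ((a+b+1).choose (b+1) : ℕ) * ((b:ℝ)+1) := by
    rw [Nat.choose_symm_add]
    exact_mod_cast Nat.add_one_mul_choose_eq (a+b) b
  rw [h3] at hb
  have hB : Jn 0 a b ≠ 0 := by rintro h; simp [h] at hb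
  have ha : (b:ℝ)+1 ≠ 0 := by positivity
  have hn : (a:ℝ)+b+2 ≠ 0 := by positivity
  have e1 : Jn 0 a b - Jn 0 (a+1) b = (b+1) * Jn 0 a b / (a+b+2) := by
    field_simp; simp at h1; linarith
  have e2 : Jn (1/2) a b - Jn (1/2) (a+1) b =
      ((b+1) * Jn (1/2) a b - 1/2^(a+b+2)) / (a+b+2) := by
    have : (1/2:ℝ)^(a+1) * (1-1/2)^(b+1) = 1/2^(a+b+2) := by
      rw [show (1:ℝ)-1/2 = 1/2 by norm_num, ← pow_add, one_div_pow]; congr 2; ring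
    rw [this] at h2
    rw [eq_div_iff hn]; linarith
  have e3 : (((a+b+1).choose (b+1) : ℕ) : ℝ) = 1 / (Jn 0 a b * (b+1)) := by
    rw [eq_div_iff (by positivity)]; linarith
  rw [e1, e2, e3]
  field_simp

lemma choose_lt (n : ℕ) : ∀ k, (n+3).choose k < 2^(n+2) := by
  induction n with
  | zero =>
    intro k
    by_cases hk : k ≤ 3
    · interval_cases k <;> decide
    · rw [Nat.choose_eq_zero_of_lt (by omega)]; norm_num
  | succ n ih =>
    intro k
    cases k with
    | zero => simp
    | succ k =>
      have h1 := ih k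
      have h2 := ih (k+1)
      have h3 : (n+1+3).choose (k+1) = (n+3).choose k + (n+3).choose (k+1) :=
        Nat.choose_succ_succ (n+3) k
      have h4 : 2^(n+1+2) = 2^(n+2) * 2 := pow_succ 2 (n+2)
      omega

lemma I11 : I 1 1 = 1/2 := by
  have := I_eq 0 0
  simp [Jn] at this
  rw [this]; norm_num

lemma hFn_lip (x y d : ℝ) (h : |x - y| < d) : -d < hFn x - hFn y := by
  have := abs_lt.1 h
  unfold hFn
  rcases max_cases x (1-x) with h | h <;> rcases max_cases y (1-y) with h' | h' <;> linarith

lemma step_lt (n k : ℕ) (h : 3 ≤ n) : (((n.choose k : ℕ) : ℝ)) / 2^(n+1) < 1/4 := by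
  obtain ⟨m, rfl⟩ := Nat.exists_eq_add_of_le' h
  have := choose_lt m k
  have h' : (((m+3).choose k : ℕ) : ℝ) < 2^(m+2) := by exact_mod_cast this
  rw [div_lt_iff₀ (by positivity)]
  calc _ < _ := h'
    _ = _ := by ring

lemma I21 : I 2 1 = 3/4 := by
  have := I_left 0 0
  norm_num [I11] at this; exact this

lemma I12 : I 1 2 = 1/4 := by
  have := I_right 0 0
  norm_num [I11] at this; exact this

lemma I31 : I 3 1 = 7/8 := by
  have := I_left 1 0
  norm_num [I21] at this; exact this

lemma I22 : I 2 2 = 1/2 := by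
  have := I_right 1 0
  norm_num [I21] at this; exact this

lemma I13 : I 1 3 = 1/8 := by
  have := I_right 0 1
  norm_num [I12] at this; exact this

lemma R21 : Rminus 2 1 = -1/4 := by
  norm_num [Rminus, hFn, I21, I31, I22]

theorem Rminus_two_one_min :
    Rminus 2 1 = Rminus 1 2 ∧
      ∀ a b : ℕ, 0 < a → 0 < b → a + b ≠ 3 → Rminus 2 1 < Rminus a b := by
  refine ⟨?_, ?_⟩
  · rw [R21]
    norm_num [Rminus, hFn, I12, I13, I22]
  · intro a b ha hb hab
    rw [R21]
    obtain ⟨a, rfl⟩ := Nat.exists_eq_add_of_le' ha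
    obtain ⟨b, rfl⟩ := Nat.exists_eq_add_of_le' hb
    by_cases h0 : a + b = 0
    · obtain ⟨rfl, rfl⟩ : a = 0 ∧ b = 0 := by omega
      norm_num [Rminus, hFn, I11, I12, I21]
    · have hn : 3 ≤ a + b + 1 := by omega
      have s1 := step_lt (a+b+1) (a+1) hn
      have s2 := step_lt (a+b+1) (b+1) hn
      unfold Rminus
      push_cast
      rw [neg_div]
      refine lt_min (hFn_lip _ _ _ ?_) (hFn_lip _ _ _ ?_)
      · rw [I_left, add_sub_cancel_left, abs_of_nonneg (by positivity)]
        exact s1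
      · rw [I_right, sub_sub_cancel_left, abs_neg, abs_of_nonneg (by positivity)]
        exact s2
end

section
/- For all positive integers a and b with a ≥ b + 1, R⁻(a+1, b) > R⁻(a, b); that is, for fixed b, R⁻(a,b) is strictly increasing in a on the range a ≥ b + 1. Moreover R⁻(b+2, b+1) > R⁻(b+1, b) for every positive integer b, i.e., R⁻(b+1, b) is strictly increasing in b. -/
noncomputable def GG (s : ℝ) (m n : ℕ) : ℝ := ∫ t in s..1, t ^ m * (1 - t) ^ n

lemma GG_add (s : ℝ) (m n : ℕ) : GG s m n = GG s (m+1) n + GG s m (n+1) := by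
  unfold GG
  rw [← intervalIntegral.integral_add]
  · congr 1; ext t; ring
  · exact Continuous.intervalIntegrable (by fun_prop) _ _
  · exact Continuous.intervalIntegrable (by fun_prop) _ _

lemma GG_parts (s : ℝ) (m n : ℕ) :
    ((m:ℝ)+1) * GG s m (n+1) - ((n:ℝ)+1) * GG s (m+1) n = - (s^(m+1) * (1-s)^(n+1)) := by
  have h := intervalIntegral.integral_eq_sub_of_hasDerivAt (a := s) (b := 1)
    (f := fun t : ℝ => t^(m+1) * (1-t)^(n+1))
    (f' := fun t : ℝ => ((m:ℝ)+1) * (t^m * (1-t)^(n+1)) - ((n:ℝ)+1) * (t^(m+1) * (1-t)^n))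
    (fun t _ => by
      have h1 := (hasDerivAt_pow (m+1) t)
      have h2 := ((hasDerivAt_id t).const_sub 1).pow (n+1)
      have h3 := h1.mul h2
      refine h3.congr_deriv ?_
      simp only [Pi.pow_apply, Pi.sub_apply, id, Nat.add_sub_cancel]
      push_cast
      ring)
    (Continuous.intervalIntegrable (by fun_prop) _ _)
  rw [intervalIntegral.integral_sub, intervalIntegral.integral_const_mul,
    intervalIntegral.integral_const_mul] at h
  · unfold GG
    rw [h]; simp
  · exact Continuous.intervalIntegrable (by fun_prop) _ _
  · exact Continuous.intervalIntegrable (by fun_prop) _ _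

lemma GG_pos (m n : ℕ) : 0 < GG 0 m n := by
  unfold GG
  apply intervalIntegral.intervalIntegral_pos_of_pos_on
  · exact Continuous.intervalIntegrable (by fun_prop) _ _
  · intro x hx
    have h1 := hx.1
    have h2 : 0 < 1 - x := by linarith [hx.2]
    positivity
  · norm_num

lemma GG_symm (m : ℕ) : GG 0 m m = 2 * GG (1/2) m m := by
  have h := intervalIntegral.integral_comp_sub_left (a := 0) (b := 1/2)
    (fun t : ℝ => t^m * (1-t)^m) 1
  have h2 := intervalIntegral.integral_add_adjacent_intervals (a := (0:ℝ)) (b := 1/2) (c := 1)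
    (f := fun t : ℝ => t^m * (1-t)^m) (μ := MeasureTheory.volume)
    (Continuous.intervalIntegrable (by fun_prop) _ _)
    (Continuous.intervalIntegrable (by fun_prop) _ _)
  have h3 : (fun x : ℝ => (1-x)^m * (1-(1-x))^m) = fun t : ℝ => t^m * (1-t)^m := by
    ext x; ring
  simp only [h3] at h
  norm_num at h h2
  unfold GG
  norm_num
  linarith

lemma beta_eq (m n : ℕ) : betaFn ((m:ℝ)+1) ((n:ℝ)+1) = GG 0 m n := by
  unfold betaFn GG
  simp

lemma I_eq_s18 (m n : ℕ) : I ((m:ℝ)+1) ((n:ℝ)+1) = GG (1/2) m n / GG 0 m n := by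
  unfold I
  rw [beta_eq]
  unfold GG
  simp
  ring

noncomputable def QQ (m n : ℕ) : ℝ := GG (1/2) m n / GG 0 m n

noncomputable def DD (m n : ℕ) : ℝ := (1/2)^(m+n+2) / (((n:ℝ)+1) * GG 0 m n)

lemma K_right (m n : ℕ) : ((m:ℝ)+n+2) * GG 0 m (n+1) = ((n:ℝ)+1) * GG 0 m n := by
  have h1 := GG_add 0 m n
  have h2 := GG_parts 0 m n
  simp at h2
  rw [h1]; linarith

lemma K_left (m n : ℕ) : ((m:ℝ)+n+2) * GG 0 (m+1) n = ((m:ℝ)+1) * GG 0 m n := by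
  have h1 := GG_add 0 m n
  have h2 := GG_parts 0 m n
  simp at h2
  rw [h1]; linarith

lemma Q_right (m n : ℕ) : QQ m (n+1) = QQ m n - DD m n := by
  have h1 := GG_add (1/2) m n
  have h2 := GG_parts (1/2) m n
  have h3 := K_right m n
  have p := GG_pos m n
  have p' := GG_pos m (n+1)
  have h4 : ((m:ℝ)+n+2) * GG (1/2) m (n+1) = ((n:ℝ)+1) * GG (1/2) m n - (1/2)^(m+n+2) := by
    have : (1/2:ℝ)^(m+n+2) = (1/2)^(m+1) * (1-1/2)^(n+1) := by norm_num; ring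
    rw [this, h1]; linarith
  have e : QQ m (n+1) = (((m:ℝ)+n+2) * GG (1/2) m (n+1)) / (((m:ℝ)+n+2) * GG 0 m (n+1)) := by
    unfold QQ
    rw [mul_div_mul_left]; positivity
  rw [e, h3, h4]
  unfold QQ DD
  field_simp

lemma Q_left (m n : ℕ) : QQ m n ≤ QQ (m+1) n := by
  have h1 := GG_add (1/2) m n
  have h2 := GG_parts (1/2) m n
  have h3 := K_left m n
  have p := GG_pos m n
  have p' := GG_pos (m+1) n
  have h4 : ((m:ℝ)+n+2) * GG (1/2) (m+1) n = ((m:ℝ)+1) * GG (1/2) m n + (1/2)^(m+n+2) := by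
    have : (1/2:ℝ)^(m+n+2) = (1/2)^(m+1) * (1-1/2)^(n+1) := by norm_num; ring
    rw [this, h1]; linarith
  have e : QQ (m+1) n = (((m:ℝ)+n+2) * GG (1/2) (m+1) n) / (((m:ℝ)+n+2) * GG 0 (m+1) n) := by
    unfold QQ
    rw [mul_div_mul_left]; positivity
  have e2 : QQ m n = (((m:ℝ)+1) * GG (1/2) m n) / (((m:ℝ)+1) * GG 0 m n) := by
    unfold QQ
    rw [mul_div_mul_left]; positivity
  rw [e, e2, h3, h4]
  have : (0:ℝ) < (1/2)^(m+n+2) := by positivity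
  gcongr
  linarith

lemma Q_half (n k : ℕ) : 1/2 ≤ QQ (n+k) n := by
  induction k with
  | zero =>
    unfold QQ
    have := GG_pos n n
    rw [add_zero, le_div_iff₀ this, GG_symm]; linarith
  | succ k ih => exact ih.trans (Q_left (n+k) n)

lemma hFn_eq (x : ℝ) (h : 1/2 ≤ x) : hFn x = x := by
  unfold hFn; exact max_eq_left (by linarith)

lemma D_pos (m n : ℕ) : 0 < DD m n := by
  have := GG_pos m n
  unfold DD; positivity

lemma Rm_eq (m n : ℕ) (h : n + 1 ≤ m) : Rminus ((m:ℝ)+1) ((n:ℝ)+1) = - DD m n := by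
  obtain ⟨k, rfl⟩ := Nat.exists_eq_add_of_le h
  have a1 := I_eq_s18 (n+1+k) n
  have a2 := I_eq_s18 (n+1+k+1) n
  have a3 := I_eq_s18 (n+1+k) (n+1)
  change _ = QQ _ _ at a1 a2 a3
  push_cast at a1 a2 a3
  unfold Rminus
  push_cast
  rw [a1, a2, a3]
  have b1 : 1/2 ≤ QQ (n+1+k) n := by
    have := Q_half n (1+k); rwa [← add_assoc] at this
  have b2 := Q_left (n+1+k) n
  have b3 := Q_half (n+1) k
  rw [hFn_eq _ b1, hFn_eq _ b3, hFn_eq _ (b1.trans b2), Q_right]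
  have := D_pos (n+1+k) n
  rw [min_eq_right] <;> linarith

lemma D_left (m n : ℕ) (h : n < m) : DD (m+1) n < DD m n := by
  have p := GG_pos m n
  have p' := GG_pos (m+1) n
  have h3 := K_left m n
  have h' : (n:ℝ) < m := by exact_mod_cast h
  have e : GG 0 m n < 2 * GG 0 (m+1) n := by
    by_contra hc
    push Not at hc
    nlinarith
  unfold DD
  rw [div_lt_div_iff₀ (by positivity) (by positivity)]
  have : (1/2:ℝ)^(m+1+n+2) = (1/2)^(m+n+2) * (1/2) := by ring
  rw [this]
  have q : (0:ℝ) < (1/2)^(m+n+2) * (n+1) := by positivity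
  nlinarith

lemma D_diag (n : ℕ) : DD (n+2) (n+1) < DD (n+1) n := by
  have p := GG_pos (n+1) n
  have p' := GG_pos (n+2) (n+1)
  have h1 := K_left (n+1) n
  have h2 := K_right (n+2) n
  push_cast at h1 h2
  have e : ((n:ℝ)+1) * GG 0 (n+1) n < 4 * (((n:ℝ)+2) * GG 0 (n+2) (n+1)) := by
    have e1 : GG 0 (n+1+1) n = ((n:ℝ)+2) / (2*n+3) * GG 0 (n+1) n := by
      field_simp; linarith
    have e2 : GG 0 (n+2) (n+1) = ((n:ℝ)+1) / (2*n+4) * GG 0 (n+2) n := by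
      field_simp; linarith
    rw [e2, e1]
    have : 4 * (((n:ℝ)+2) * (((n:ℝ)+1) / (2*n+4) * (((n:ℝ)+2) / (2*n+3) * GG 0 (n+1) n)))
      = (((n:ℝ)+1) * GG 0 (n+1) n) * ((2*n+4)/(2*n+3)) := by
      field_simp; ring
    rw [this]
    apply lt_mul_of_one_lt_right (by positivity)
    rw [one_lt_div (by positivity)]; linarith
  unfold DD
  rw [div_lt_div_iff₀ (by positivity) (by positivity)]
  have : (1/2:ℝ)^(n+2+(n+1)+2) = (1/2)^(n+1+n+2) * (1/4) := by ring
  rw [this]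
  have q : (0:ℝ) < (1/2)^(n+1+n+2) := by positivity
  push_cast
  nlinarith

theorem Rminus_strict_mono :
    (∀ a b : ℕ, 0 < a → 0 < b → b + 1 ≤ a → Rminus ((a : ℝ) + 1) b > Rminus a b) ∧
    (∀ b : ℕ, 0 < b → Rminus ((b : ℝ) + 2) ((b : ℝ) + 1) > Rminus ((b : ℝ) + 1) b) := by
  constructor
  · intro a b ha hb hab
    obtain ⟨m, rfl⟩ := Nat.exists_eq_succ_of_ne_zero ha.ne'
    obtain ⟨n, rfl⟩ := Nat.exists_eq_succ_of_ne_zero hb.ne'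
    have h1 := Rm_eq m n (by omega)
    have h2 := Rm_eq (m+1) n (by omega)
    have h3 := D_left m n (by omega)
    push_cast at *
    rw [h1, h2]; linarith
  · intro b hb
    obtain ⟨n, rfl⟩ := Nat.exists_eq_succ_of_ne_zero hb.ne'
    have h1 := Rm_eq (n+1) n (by omega)
    have h2 := Rm_eq (n+2) (n+1) (by omega)
    have h3 := D_diag n
    push_cast at *
    rw [show (n:ℝ)+1+2 = n+2+1 by ring, h1, h2]; linarith
end
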